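/- Let I ⊆ A = K[x_1,…,x_n] be a nonzero proper monomial ideal. Then the Krull dimension of the fiber ring F(I) = R(I)/mR(I) equals c(I) + 1, where c(I) = max{dim F : F a compact face of conv(I)} and dim F denotes the dimension of the affine hull of F. In other words, the analytic spread ℓ of I satisfies ℓ = c(I) + 1. -/

import Mathlib

open MvPolynomial Pointwise

attribute [local instance] Classical.propDecidable

noncomputable section

/-- The real exponent vector of a monomial exponent `a : Fin n →₀ ℕ`. -/
def expVec {n : ℕ} (a : Fin n →₀ ℕ) : Fin n → ℝ := fun i => (a i : ℝ)

/-- The standard inner product on `ℝ^n`. -/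
def dotR {n : ℕ} (u v : Fin n → ℝ) : ℝ := ∑ i, u i * v i

/-- A monomial ideal: an ideal generated by a set of monomials. -/
def IsMonomialIdeal {K : Type*} [Field K] {n : ℕ} (I : Ideal (MvPolynomial (Fin n) K)) : Prop :=
  ∃ S : Set (Fin n →₀ ℕ), I = Ideal.span ((fun a => (monomial a (1 : K))) '' S)

/-- The Newton polyhedron of an ideal: the convex hull of the exponent vectors of the
monomials belonging to the ideal. -/
def newtonPolyhedron {K : Type*} [Field K] {n : ℕ} (I : Ideal (MvPolynomial (Fin n) K)) :
    Set (Fin n → ℝ) :=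
  convexHull ℝ {v | ∃ a : Fin n →₀ ℕ, monomial a (1 : K) ∈ I ∧ v = expVec a}

/-- The hyperplane `{v : ⟨u,v⟩ = c}` is a supporting hyperplane of `C`:
`C ⊆ {v : ⟨u,v⟩ ≥ c}` and the hyperplane meets `C`. -/
def IsSupp {n : ℕ} (C : Set (Fin n → ℝ)) (u : Fin n → ℝ) (c : ℝ) : Prop :=
  (∀ v ∈ C, c ≤ dotR u v) ∧ ∃ v ∈ C, dotR u v = c

/-- `F` is a proper face of `C`: `F = S ∩ C` for some supporting hyperplane `S`, `F ≠ C`. -/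
def IsProperFace {n : ℕ} (C F : Set (Fin n → ℝ)) : Prop :=
  ∃ u c, u ≠ 0 ∧ IsSupp C u c ∧ F = {v ∈ C | dotR u v = c} ∧ F ≠ C

/-- A compact face is a proper face that is compact. -/
def IsCompactFace {n : ℕ} (C F : Set (Fin n → ℝ)) : Prop :=
  IsProperFace C F ∧ IsCompact F

/-- A maximal compact face: a compact face maximal under inclusion. -/
def IsMaxCompactFace {n : ℕ} (C F : Set (Fin n → ℝ)) : Prop :=
  IsCompactFace C F ∧ ∀ G, IsCompactFace C G → F ⊆ G → F = G

/-- The graded maximal ideal `(x_1, …, x_n)` of `K[x_1, …, x_n]`. -/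
def maxIdeal (K : Type*) [Field K] (n : ℕ) : Ideal (MvPolynomial (Fin n) K) :=
  Ideal.span (Set.range fun i => (X i : MvPolynomial (Fin n) K))

/-- `f` is a minimal generator of the monomial ideal `L` if `f ∈ L` and `f ∉ (x_1,…,x_n)·L`. -/
def IsMinGen {K : Type*} [Field K] {n : ℕ} (L : Ideal (MvPolynomial (Fin n) K))
    (f : MvPolynomial (Fin n) K) : Prop :=
  f ∈ L ∧ f ∉ maxIdeal K n * L

/-- `L` is a reduction ideal of `I`: `L ⊆ I` and `L·I^{m-1} = I^m` for some `m ≥ 1`. -/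
def IsReduction {K : Type*} [Field K] {n : ℕ} (L I : Ideal (MvPolynomial (Fin n) K)) : Prop :=
  L ≤ I ∧ ∃ m : ℕ, 1 ≤ m ∧ L * I ^ (m - 1) = I ^ m

/-- `c(I)`: the maximum of the dimensions (of affine hulls) of the compact faces of the
Newton polyhedron of `I`. -/
def maxCompactFaceDim {K : Type*} [Field K] {n : ℕ} (I : Ideal (MvPolynomial (Fin n) K)) : ℕ :=
  sSup {d : ℕ | ∃ F, IsCompactFace (newtonPolyhedron I) F ∧
    d = Module.finrank ℝ (affineSpan ℝ F).direction}

/-!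
The fiber ring is generated over `K` by the classes of the elements `x^a t` with `x^a ∈ I`, so its
dimension is the largest number of these classes that are algebraically independent. A product of
such elements vanishes in the fiber ring as soon as its exponent properly dominates the exponent of
another product with equally many factors. By Farkas' lemma, the products of the `x^(a i) t` can
all be nonzero only if some positive weight attains its minimum over the exponents of `I` at every
`a i`, and the converse is clear by comparing weights. As the compact faces of the Newton polyhedron
are those with a positive inner normal vector, this says that the `a i` lie on a common compact
face. For such `a i`, the products are pairwise distinct if and only if the `a i` are affinely
independent. So the dimension is the largest number of affinely independent exponents on a compact
face.
-/

section KrullDimension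

theorem ringKrullDim_eq_of_isIntegral {R S : Type*} [CommRing R] [CommRing S] [Algebra R S]
    [Algebra.IsIntegral R S] (hinj : Function.Injective (algebraMap R S)) :
    ringKrullDim S = ringKrullDim R := by
  apply le_antisymm
  · exact Order.krullDim_le_of_strictMono (PrimeSpectrum.comap (algebraMap R S))
      fun I J h ↦ Ideal.IsIntegral.comap_lt_comap (I := I.asIdeal) (J := J.asIdeal) h
  · refine iSup_le fun l ↦ ?_
    have : FaithfulSMul R S := (faithfulSMul_iff_algebraMap_injective R S).mpr hinj
    obtain ⟨P, _, _⟩ := Ideal.nonempty_primesOver (S := S) (RelSeries.head l).asIdeal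
    obtain ⟨L, hL, -⟩ := Ideal.exists_ltSeries_of_hasGoingUp l P
    exact hL ▸ Order.LTSeries.length_le_krullDim L

variable {K : Type*} [Field K]

theorem ringKrullDim_eq_toENat_trdeg (D : Type*) [CommRing D] [IsDomain D] [Algebra K D]
    [Algebra.FiniteType K D] :
    ringKrullDim D = (Cardinal.toENat (Algebra.trdeg K D) : WithBot ℕ∞) := by
  obtain ⟨s, g, hg, hgint⟩ := exists_integral_inj_algHom_of_fg K D
  algebraize [g.toRingHom]
  have : IsScalarTower K (MvPolynomial (Fin s) K) D := .of_algHom g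
  have : FaithfulSMul (MvPolynomial (Fin s) K) D :=
    (faithfulSMul_iff_algebraMap_injective _ _).mpr hg
  have htrdeg : (s : Cardinal) = Algebra.trdeg K D := by
    simpa [MvPolynomial.trdeg_of_isDomain, trdeg_eq_zero]
      using lift_trdeg_add_eq K (MvPolynomial (Fin s) K) D
  rw [ringKrullDim_eq_of_isIntegral (R := MvPolynomial (Fin s) K) hg, ← htrdeg]
  simp

variable {B : Type*} [CommRing B] [Algebra K B]

theorem exists_isPrime_injective_quotient_comp {A : Type*} [CommRing A] [IsDomain A] [Algebra K A]
    {f : A →ₐ[K] B} (hf : Function.Injective f) :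
    ∃ P : Ideal B, P.IsPrime ∧ Function.Injective ((Ideal.Quotient.mkₐ K P).comp f) := by
  obtain ⟨P, hP, hcomap⟩ := Ideal.exists_comap_eq_of_mem_minimalPrimes_of_injective
    (f := (f : A →+* B)) hf ⊥ (by rw [IsDomain.minimalPrimes_eq_singleton_bot]; rfl)
  refine ⟨P, hP, (injective_iff_map_eq_zero _).mpr fun a ha ↦ ?_⟩
  have hmem : a ∈ P.comap (f : A →+* B) :=
    Ideal.mem_comap.mpr (Ideal.Quotient.eq_zero_iff_mem.mp ha)
  simpa only [hcomap, Ideal.mem_bot] using hmem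

theorem enatCard_le_ringKrullDim_of_algebraicIndependent [Algebra.FiniteType K B]
    {ι : Type*} {x : ι → B} (hx : AlgebraicIndependent K x) :
    (ENat.card ι : WithBot ℕ∞) ≤ ringKrullDim B := by
  obtain ⟨P, _, hP⟩ := exists_isPrime_injective_quotient_comp hx
  have hy : AlgebraicIndependent K (Ideal.Quotient.mkₐ K P ∘ x) := by
    rw [comp_aeval] at hP
    exact hP
  refine le_trans ?_ (ringKrullDim_quotient_le P)
  rw [ringKrullDim_eq_toENat_trdeg (K := K)]
  simpa [ENat.card] using Cardinal.toENat.monotone' hy.lift_cardinalMk_le_trdeg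

theorem exists_isPrime_ringKrullDim_quotient_eq [Nontrivial B] [Algebra.FiniteType K B] :
    ∃ P : Ideal B, P.IsPrime ∧ ringKrullDim (B ⧸ P) = ringKrullDim B := by
  obtain ⟨s, g, hg, hgint⟩ := exists_integral_inj_algHom_of_fg K B
  obtain ⟨P, hP, hinj⟩ := exists_isPrime_injective_quotient_comp hg
  have hPint : ((Ideal.Quotient.mkₐ K P).comp g).IsIntegral :=
    RingHom.IsIntegral.trans _ _ hgint <|
      RingHom.isIntegral_of_surjective _ Ideal.Quotient.mk_surjective
  refine ⟨P, hP, ?_⟩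
  algebraize [g.toRingHom, ((Ideal.Quotient.mkₐ K P).comp g).toRingHom]
  rw [ringKrullDim_eq_of_isIntegral hg, ringKrullDim_eq_of_isIntegral hinj]

theorem exists_algebraicIndepOn_ringKrullDim_eq_card [Nontrivial B] [Algebra.FiniteType K B]
    {ι : Type*} {x : ι → B} (hx : Algebra.adjoin K (Set.range x) = ⊤) :
    ∃ s : Finset ι, AlgebraicIndepOn K x s ∧ ringKrullDim B = s.card := by
  obtain ⟨P, _, hP⟩ := exists_isPrime_ringKrullDim_quotient_eq (K := K) (B := B)
  let π := Ideal.Quotient.mkₐ K P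
  have hadjoin : Algebra.adjoin K (Set.range (π ∘ x)) = ⊤ := by
    rw [Set.range_comp, ← AlgHom.map_adjoin, hx, Algebra.map_top, AlgHom.range_eq_top]
    exact Ideal.Quotient.mkₐ_surjective K P
  have : Algebra.IsAlgebraic (Algebra.adjoin K (Set.range (π ∘ x))) (B ⧸ P) := by
    rw [hadjoin]
    exact ⟨fun d ↦ isAlgebraic_algebraMap (⟨d, trivial⟩ : (⊤ : Subalgebra K (B ⧸ P)))⟩
  obtain ⟨t, htsub, ht⟩ := exists_isTranscendenceBasis_subset (R := K) (Set.range (π ∘ x))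
  have hsurj : Set.SurjOn (π ∘ x) Set.univ t := by rwa [Set.SurjOn, Set.image_univ]
  obtain ⟨s, -, hs⟩ := hsurj.exists_bijOn_subset
  obtain rfl := hs.image_eq
  have hfin : s.Finite := by
    refine .of_finite_image ?_ hs.injOn
    rw [← Set.finite_coe_iff, ← Cardinal.lt_aleph0_iff_finite, ht.cardinalMk_eq_trdeg]
    exact trdeg_lt_aleph0_of_finiteType
  lift s to Finset ι using hfin
  refine ⟨s, .of_comp π ((algebraicIndependent_image hs.injOn).mpr ht.1), ?_⟩
  have hcard : Cardinal.toENat (Cardinal.mk (π ∘ x '' s)) = s.card :=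
    hs.injOn.encard_image.trans (Set.encard_coe_eq_coe_finsetCard s)
  rw [← hP, ringKrullDim_eq_toENat_trdeg (K := K), ← ht.cardinalMk_eq_trdeg, hcard]
  rfl

end KrullDimension

section Farkas

theorem mem_hull_image_of_forall_nonneg {k W ι : Type*} [Field k] [LinearOrder k]
    [IsStrictOrderedRing k] [AddCommGroup W] [Module k W] (s : Finset ι)
    (α : ι → Module.Dual k W) (γ : Module.Dual k W)
    (h : ∀ x, (∀ i ∈ s, 0 ≤ α i x) → 0 ≤ γ x) : γ ∈ PointedCone.hull k (α '' s) := by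
  induction s using Finset.induction_on generalizing α γ with
  | empty =>
    have hγ : γ = 0 := LinearMap.ext fun x ↦
      le_antisymm (by simpa using h (-x) (by simp)) (h x (by simp))
    exact hγ ▸ zero_mem _
  | insert j s _ ih =>
    by_cases hs : ∀ x, (∀ i ∈ s, 0 ≤ α i x) → 0 ≤ γ x
    · exact Submodule.span_mono (Set.image_mono (by simp)) (ih α γ hs)
    push Not at hs
    obtain ⟨x₁, hx₁, hγx₁⟩ := hs
    have hj : α j x₁ < 0 := by
      by_contra! hj
      exact hγx₁.not_ge (h x₁ ((Finset.forall_mem_insert ..).mpr ⟨hj, hx₁⟩))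
    -- Restrict all functionals to the kernel of `α j`, along the projection with direction `x₁`.
    let r (φ : Module.Dual k W) : Module.Dual k W := φ + -(φ x₁ / α j x₁) • α j
    have hr (φ x) : r φ x = φ (x - (α j x / α j x₁) • x₁) := by
      simp only [r, LinearMap.add_apply, LinearMap.smul_apply, smul_eq_mul, map_sub, map_smul]
      ring
    have hcone : r γ ∈ PointedCone.hull k ((fun i ↦ r (α i)) '' s) := by
      refine ih _ _ fun x hx ↦ ?_
      rw [hr]
      refine h _ ((Finset.forall_mem_insert ..).mpr ⟨?_, fun i hi ↦ hr (α i) x ▸ hx i hi⟩)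
      simp [hj.ne]
    have hmem {i} (hi : i ∈ insert j s) : α i ∈ PointedCone.hull k (α '' ↑(insert j s)) :=
      PointedCone.subset_hull (Set.mem_image_of_mem α hi)
    have hjmem {c : k} (hc : 0 ≤ c) : c • α j ∈ PointedCone.hull k (α '' ↑(insert j s)) :=
      PointedCone.smul_mem _ hc (hmem (Finset.mem_insert_self j s))
    have hle : PointedCone.hull k ((fun i ↦ r (α i)) '' s) ≤
        PointedCone.hull k (α '' ↑(insert j s)) := by
      refine Submodule.span_le.mpr ?_
      rintro _ ⟨i, hi, rfl⟩
      exact add_mem (hmem (Finset.mem_insert_of_mem hi))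
        (hjmem (neg_nonneg.mpr (div_nonpos_of_nonneg_of_nonpos (hx₁ i hi) hj.le)))
    have hγ : γ = r γ + (γ x₁ / α j x₁) • α j := by simp only [r]; module
    exact hγ ▸ add_mem (hle hcone) (hjmem (div_nonneg_of_nonpos hγx₁.le hj.le))

theorem exists_nonneg_sum_smul_eq_of_forall_nonneg {k W ι : Type*} [Field k] [LinearOrder k]
    [IsStrictOrderedRing k] [AddCommGroup W] [Module k W] [Fintype ι] {α : ι → Module.Dual k W}
    {γ : Module.Dual k W} (h : ∀ x, (∀ i, 0 ≤ α i x) → 0 ≤ γ x) :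
    ∃ c : ι → k, (∀ i, 0 ≤ c i) ∧ ∑ i, c i • α i = γ := by
  have hγ := mem_hull_image_of_forall_nonneg Finset.univ α γ (by simpa using h)
  rw [Finset.coe_univ, Set.image_univ] at hγ
  obtain ⟨c, hc⟩ := (Submodule.mem_span_range_iff_exists_fun _).mp hγ
  exact ⟨fun i ↦ c i, fun i ↦ (c i).2, hc⟩

open scoped Matrix in
theorem exists_pos_mulVec_nonneg_or_exists_nonneg_vecMul_neg {k ι σ : Type*} [Field k]
    [LinearOrder k] [IsStrictOrderedRing k] [Fintype ι] [Fintype σ] (A : Matrix ι σ k) :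
    (∃ u : σ → k, (∀ j, 0 < u j) ∧ 0 ≤ A *ᵥ u) ∨ ∃ m : ι → k, 0 ≤ m ∧ m ᵥ* A < 0 := by
  by_cases h : ∀ j, ∃ u : σ → k, 0 ≤ u ∧ 0 ≤ A *ᵥ u ∧ 0 < u j
  · choose u hu hA hpos using h
    refine .inl ⟨∑ j, u j, fun j ↦ ?_, ?_⟩
    · rw [Finset.sum_apply]
      exact Finset.sum_pos' (fun l _ ↦ hu l j) ⟨j, Finset.mem_univ j, hpos j⟩
    · rw [Matrix.mulVec_sum]
      exact Finset.sum_nonneg fun l _ ↦ hA l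
  push Not at h
  obtain ⟨j, hj⟩ := h
  let α : σ ⊕ ι → Module.Dual k (σ → k) :=
    Sum.elim LinearMap.proj fun i ↦ LinearMap.proj i ∘ₗ A.mulVecLin
  obtain ⟨c, hc, hsum⟩ := exists_nonneg_sum_smul_eq_of_forall_nonneg (α := α)
    (γ := -LinearMap.proj j) fun u hu ↦ by
      simpa using hj u (fun l ↦ hu (.inl l)) fun i ↦ hu (.inr i)
  have hcoord (l : σ) : ((c ∘ .inr) ᵥ* A) l = -(Pi.single l 1 : σ → k) j - c (.inl l) := by
    rw [eq_sub_iff_add_eq']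
    simpa [α, Fintype.sum_sum_type, Pi.single_apply, Matrix.vecMul, dotProduct]
      using congr($hsum (Pi.single l 1))
  refine .inr ⟨c ∘ .inr, fun i ↦ hc _, Pi.lt_def.mpr ⟨fun l ↦ ?_, j, ?_⟩⟩
  · have hl : 0 ≤ Pi.single (M := fun _ ↦ k) l 1 j :=
      Pi.single_nonneg (α := fun _ ↦ k).mpr zero_le_one j
    rw [hcoord, Pi.zero_apply]
    linarith [hc (.inl l)]
  · rw [hcoord, Pi.single_eq_same, Pi.zero_apply]
    linarith [hc (.inl j)]

theorem exists_pos_weight_le_or_exists_weight_smul_lt {σ κ : Type*} [Finite σ] [Finite κ]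
    (b : σ →₀ ℕ) (N : ℕ) (g : κ → σ →₀ ℕ) :
    (∃ u : σ → ℝ, (∀ j, 0 < u j) ∧ ∀ k, Finsupp.weight u b ≤ N * Finsupp.weight u (g k)) ∨
      ∃ β : κ →₀ ℕ, Finsupp.weight g (N • β) < β.degree • b := by
  cases nonempty_fintype σ
  cases nonempty_fintype κ
  let A : Matrix κ σ ℚ := .of fun k j ↦ N * g k j - b j
  obtain ⟨u, hu, hA⟩ | ⟨m, hm, hA⟩ := exists_pos_mulVec_nonneg_or_exists_nonneg_vecMul_neg A
  · refine .inl ⟨fun j ↦ u j, fun j ↦ Rat.cast_pos.mpr (hu j), fun k ↦ ?_⟩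
    have hk : 0 ≤ ∑ j, (N * g k j - b j) * u j := hA k
    simp only [sub_mul, Finset.sum_sub_distrib, mul_assoc, ← Finset.mul_sum, sub_nonneg] at hk
    simp only [Finsupp.weight_eq_sum, nsmul_eq_mul]
    exact_mod_cast hk
  · lift m to κ → ℚ≥0 using hm
    obtain ⟨d, hd⟩ := IsLocalization.exist_integer_multiples_of_finite (nonZeroDivisors ℕ) m
    choose β hβ using hd
    have hβ' (k) : (β k : ℚ) = d * m k := by
      simpa using congr(NNRat.cast (K := ℚ) $(hβ k))
    have hd : (0 : ℚ) < (d : ℕ) := by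
      exact_mod_cast Nat.pos_of_ne_zero (nonZeroDivisors.coe_ne_zero d)
    let γ : κ →₀ ℕ := Finsupp.equivFunOnFinite.symm β
    have hcoord (j) : (Finsupp.weight g (N • γ) j : ℚ) - (γ.degree • b) j =
        d * Matrix.vecMul (fun k ↦ (m k : ℚ)) A j := by
      simp only [A, γ, Finsupp.weight_eq_sum, Finsupp.degree_eq_sum, Matrix.vecMul, dotProduct,
        Matrix.of_apply, Finsupp.finsetSum_apply, Finsupp.smul_apply, smul_eq_mul, Nat.cast_sum,
        Finsupp.equivFunOnFinite_symm_apply_apply, Nat.cast_mul, hβ', Finset.mul_sum,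
        Finset.sum_mul, ← Finset.sum_sub_distrib]
      exact Finset.sum_congr rfl fun k _ ↦ by ring
    obtain ⟨hle, j, hlt⟩ := Pi.lt_def.mp hA
    refine .inr ⟨γ, Finsupp.lt_def.mpr ⟨fun i ↦ ?_, j, ?_⟩⟩
    · exact_mod_cast sub_nonpos.mp
        ((hcoord i).trans_le (mul_nonpos_of_nonneg_of_nonpos hd.le (hle i)))
    · exact_mod_cast sub_neg.mp ((hcoord j).trans_lt (mul_neg_of_pos_of_neg hd hlt))

end Farkas

section AffineIndependence

theorem affineIndependent_iff_linearIndependent_elim_one {k ι σ : Type*} [CommRing k]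
    {p : ι → σ → k} :
    AffineIndependent k p ↔ LinearIndependent k fun i (j : Option σ) ↦ j.elim 1 (p i) := by
  rw [affineIndependent_iff, linearIndependent_iff']
  refine forall₂_congr fun s w ↦ ?_
  rw [← and_imp]
  simp [funext_iff, Option.forall, Finset.sum_apply]

theorem linearIndependent_intCast_iff {ι σ : Type*} {v : ι → σ → ℕ} :
    LinearIndependent ℤ (fun i j ↦ (v i j : ℤ)) ↔ LinearIndependent ℕ v := by
  have hsum (s : Finset ι) (f g : ι → ℕ) :
      ∑ i ∈ s, ((f i : ℤ) - g i) • (fun j ↦ (v i j : ℤ)) = 0 ↔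
        ∑ i ∈ s, f i • v i = ∑ i ∈ s, g i • v i := by
    simp only [funext_iff, Finset.sum_apply, Pi.smul_apply, smul_eq_mul, sub_mul,
      Finset.sum_sub_distrib, Pi.zero_apply, sub_eq_zero]
    exact_mod_cast Iff.rfl
  rw [linearIndependent_iff', linearIndependent_iff'ₛ]
  refine forall_congr' fun s ↦ ⟨fun h f g hfg i hi ↦ ?_, fun h w hw i hi ↦ ?_⟩
  · exact_mod_cast sub_eq_zero.mp (h _ ((hsum s f g).mpr hfg) i hi)
  · have heq : (w i).toNat = (-w i).toNat :=
      h (fun i ↦ (w i).toNat) (fun i ↦ (-w i).toNat)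
        ((hsum s _ _).mp (by simpa only [Int.toNat_sub_toNat_neg] using hw)) i hi
    rw [← Int.toNat_sub_toNat_neg (w i), heq, sub_self]

theorem affineIndependent_natCast_iff {ι σ : Type*} [Finite σ] {a : ι → σ →₀ ℕ} :
    AffineIndependent ℝ (fun i j ↦ (a i j : ℝ)) ↔
      Function.Injective fun α : ι →₀ ℕ ↦ (α.degree, Finsupp.weight a α) := by
  have hcast : (fun i (j : Option σ) ↦ j.elim (1 : ℝ) fun j ↦ a i j) =
      fun i ↦ algebraMap ℤ ℝ ∘ fun j : Option σ ↦ ((j.elim 1 (a i) : ℕ) : ℤ) := by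
    ext i (_ | j) <;> simp
  rw [affineIndependent_iff_linearIndependent_elim_one, hcast,
    linearIndependent_algebraMap_comp_iff, linearIndependent_intCast_iff,
    linearIndependent_iff_injective_finsuppLinearCombination]
  refine forall₂_congr fun α β ↦ ?_
  simp [funext_iff, DFunLike.ext_iff, Option.forall, Finsupp.linearCombination_apply,
    Finsupp.weight_apply, Finsupp.degree_apply, Finsupp.sum, Finset.sum_apply]

end AffineIndependence

section Exponents

theorem weight_nonneg {σ M : Type*} [AddCommMonoid M] [PartialOrder M] [IsOrderedAddMonoid M]
    {u : σ → M} (hu : ∀ i, 0 ≤ u i) (a : σ →₀ ℕ) : 0 ≤ Finsupp.weight u a := by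
  rw [Finsupp.weight_apply]
  exact Finset.sum_nonneg fun i _ ↦ nsmul_nonneg (hu i) _

theorem strictMono_weight {σ M : Type*} [AddCommMonoid M] [PartialOrder M]
    [IsOrderedCancelAddMonoid M] {u : σ → M} (hu : ∀ i, 0 < u i) :
    StrictMono (Finsupp.weight u : (σ →₀ ℕ) → M) := by
  intro a b hab
  obtain ⟨d, rfl⟩ := exists_add_of_le hab.le
  have hd : d ≠ 0 := by rintro rfl; simp at hab
  rw [map_add, Finsupp.weight_apply]
  exact lt_add_of_pos_right _ (Finset.sum_pos (fun i hi ↦ nsmul_pos (hu i) (by simpa using hi))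
    (Finsupp.support_nonempty_iff.mpr hd))

variable {σ R : Type*} [CommSemiring R]

/-- The set `Γ(I)` of exponents of the monomials in `I`. -/
def exponentSet (I : Ideal (MvPolynomial σ R)) : Set (σ →₀ ℕ) :=
  {a | monomial a (1 : R) ∈ I}

/-- The exponents of `I` at which the weight `u` is minimal: those lying on the face of the Newton
polyhedron of `I` with inner normal vector `u`. -/
def minExponents (I : Ideal (MvPolynomial σ R)) (u : σ → ℝ) : Set (σ →₀ ℕ) :=
  {a ∈ exponentSet I | ∀ b ∈ exponentSet I, Finsupp.weight u a ≤ Finsupp.weight u b}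

variable {I : Ideal (MvPolynomial σ R)} {u : σ → ℝ}

theorem isUpperSet_exponentSet : IsUpperSet (exponentSet I) := by
  intro a b hab ha
  obtain ⟨d, rfl⟩ := exists_add_of_le hab
  simpa [exponentSet, monomial_mul] using I.mul_mem_right (monomial d 1) ha

theorem mem_minExponents_iff_of_mem {a b : σ →₀ ℕ} (ha : a ∈ minExponents I u) :
    b ∈ minExponents I u ↔ b ∈ exponentSet I ∧ Finsupp.weight u b = Finsupp.weight u a :=
  ⟨fun hb ↦ ⟨hb.1, (hb.2 a ha.1).antisymm (ha.2 b hb.1)⟩, fun hb ↦ ⟨hb.1, hb.2 ▸ ha.2⟩⟩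

variable [Finite σ]

theorem finite_setOf_minimal_mem_exponentSet : {a | Minimal (· ∈ exponentSet I) a}.Finite :=
  WellQuasiOrderedLE.finite_of_isAntichain (setOfPred_minimal_antichain _)

theorem finite_minExponents (hu : ∀ i, 0 < u i) : (minExponents I u).Finite :=
  finite_setOf_minimal_mem_exponentSet.subset fun _ ha ↦
    minimal_iff_forall_lt.mpr ⟨ha.1, fun b hb hmem ↦ (strictMono_weight hu hb).not_ge (ha.2 b hmem)⟩

theorem minExponents_nonempty (hI : (exponentSet I).Nonempty) (hu : ∀ i, 0 < u i) :
    (minExponents I u).Nonempty := by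
  have hmin (b) (hb : b ∈ exponentSet I) := exists_minimal_le_of_wellFoundedLT _ b hb
  obtain ⟨b, hb⟩ := hI
  obtain ⟨a, ha, hle⟩ := Set.exists_min_image _ (Finsupp.weight u)
    (finite_setOf_minimal_mem_exponentSet (I := I)) ((hmin b hb).imp fun _ h ↦ h.2)
  refine ⟨a, ha.prop, fun b hb ↦ ?_⟩
  obtain ⟨g, hgb, hg⟩ := hmin b hb
  exact (hle g hg).trans ((strictMono_weight hu).monotone hgb)

end Exponents

section CompactFaces

theorem setOf_mem_convexHull_and_eq {k E : Type*} [Field k] [LinearOrder k]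
    [IsStrictOrderedRing k] [AddCommGroup E] [Module k E] (f : E →ₗ[k] k) {s : Set E} {c : k}
    (hc : ∀ x ∈ s, c ≤ f x) :
    {x ∈ convexHull k s | f x = c} = convexHull k {x ∈ s | f x = c} := by
  refine Set.Subset.antisymm ?_ ?_
  · suffices convexHull k s ⊆ {x | c ≤ f x ∧ (f x = c → x ∈ convexHull k {x ∈ s | f x = c})} from
      fun x hx ↦ (this hx.1).2 hx.2
    refine convexHull_min (fun x hx ↦ ⟨hc x hx, fun h ↦ subset_convexHull k _ ⟨hx, h⟩⟩)
      (convex_iff_forall_pos.mpr ?_)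
    rintro x ⟨hx, hx'⟩ y ⟨hy, hy'⟩ a b ha hb hab
    have hf : f (a • x + b • y) - c = a * (f x - c) + b * (f y - c) := by
      rw [map_add, map_smul, map_smul, smul_eq_mul, smul_eq_mul]
      linear_combination c * hab
    have hxa := mul_nonneg ha.le (sub_nonneg.mpr hx)
    have hyb := mul_nonneg hb.le (sub_nonneg.mpr hy)
    refine ⟨sub_nonneg.mp (hf ▸ add_nonneg hxa hyb), fun h ↦ ?_⟩
    rw [h, sub_self, eq_comm, add_eq_zero_iff_of_nonneg hxa hyb] at hf
    exact convex_convexHull k _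
      (hx' (sub_eq_zero.mp ((mul_eq_zero_iff_left ha.ne').mp hf.1)))
      (hy' (sub_eq_zero.mp ((mul_eq_zero_iff_left hb.ne').mp hf.2))) ha.le hb.le hab
  · exact convexHull_min (fun x hx ↦ ⟨subset_convexHull k _ hx.1, hx.2⟩)
      ((convex_convexHull k s).inter (convex_hyperplane f.isLinear c))

variable {K : Type*} [Field K] {n : ℕ} {I : Ideal (MvPolynomial (Fin n) K)} {u : Fin n → ℝ}

theorem newtonPolyhedron_eq_convexHull_image :
    newtonPolyhedron I = convexHull ℝ (expVec '' exponentSet I) :=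
  congrArg _ (Set.ext fun _ ↦ exists_congr fun _ ↦ and_congr_right fun _ ↦ eq_comm)

theorem dotR_expVec (u : Fin n → ℝ) (a : Fin n →₀ ℕ) :
    dotR u (expVec a) = Finsupp.weight u a := by
  simp [dotR, expVec, Finsupp.weight_eq_sum, mul_comm]

theorem setOf_mem_newtonPolyhedron_and_dotR_eq {c : ℝ}
    (hc : ∀ a ∈ exponentSet I, c ≤ Finsupp.weight u a) :
    {v ∈ newtonPolyhedron I | dotR u v = c} =
      convexHull ℝ (expVec '' {a ∈ exponentSet I | Finsupp.weight u a = c}) := by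
  have hface := setOf_mem_convexHull_and_eq (dotProductBilin ℝ ℝ u)
    (s := expVec '' exponentSet I) (c := c)
    (Set.forall_mem_image.mpr fun a ha ↦ (hc a ha).trans_eq (dotR_expVec u a).symm)
  rw [newtonPolyhedron_eq_convexHull_image]
  refine hface.trans (congrArg _ ?_)
  ext v
  constructor
  · rintro ⟨⟨a, ha, rfl⟩, hac⟩
    exact ⟨a, ⟨ha, (dotR_expVec u a).symm.trans hac⟩, rfl⟩
  · rintro ⟨a, ⟨ha, hac⟩, rfl⟩
    exact ⟨⟨a, ha, rfl⟩, (dotR_expVec u a).trans hac⟩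

theorem setOf_mem_newtonPolyhedron_and_dotR_eq_weight {a : Fin n →₀ ℕ}
    (ha : a ∈ minExponents I u) :
    {v ∈ newtonPolyhedron I | dotR u v = Finsupp.weight u a} =
      convexHull ℝ (expVec '' minExponents I u) := by
  rw [setOf_mem_newtonPolyhedron_and_dotR_eq ha.2]
  congr! 2
  ext b
  exact (mem_minExponents_iff_of_mem ha).symm

theorem expVec_mem_newtonPolyhedron {a : Fin n →₀ ℕ} (ha : a ∈ exponentSet I) :
    expVec a ∈ newtonPolyhedron I :=
  subset_convexHull ℝ _ ⟨a, ha, rfl⟩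

theorem forall_pos_of_isBounded_minExponents (hne : (minExponents I u).Nonempty)
    (hbdd : Bornology.IsBounded (expVec '' minExponents I u)) (i : Fin n) : 0 < u i := by
  obtain ⟨a, ha⟩ := hne
  have hmem (N : ℕ) : a + Finsupp.single i N ∈ exponentSet I :=
    isUpperSet_exponentSet le_self_add ha.1
  have hweight (N : ℕ) :
      Finsupp.weight u (a + Finsupp.single i N) = Finsupp.weight u a + N * u i := by
    rw [map_add, Finsupp.weight_single, nsmul_eq_mul]
  have hi : 0 ≤ u i := by simpa [hweight] using ha.2 _ (hmem 1)
  refine hi.lt_of_ne fun h₀ ↦ ?_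
  have hmin (N : ℕ) : a + Finsupp.single i N ∈ minExponents I u :=
    (mem_minExponents_iff_of_mem ha).mpr ⟨hmem N, by simp [hweight, ← h₀]⟩
  obtain ⟨B, hB⟩ := (hbdd.image_eval i).bddAbove
  obtain ⟨N, hN⟩ := exists_nat_gt B
  have hle : ((a i + N : ℕ) : ℝ) ≤ B := by
    simpa [expVec] using hB ⟨_, ⟨_, hmin N, rfl⟩, rfl⟩
  push_cast at hle
  linarith [(a i).cast_nonneg (α := ℝ)]

theorem isCompactFace_convexHull_minExponents [NeZero n] (hI : (exponentSet I).Nonempty)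
    (hu : ∀ i, 0 < u i) :
    IsCompactFace (newtonPolyhedron I) (convexHull ℝ (expVec '' minExponents I u)) := by
  obtain ⟨a, ha⟩ := minExponents_nonempty hI hu
  have hface := setOf_mem_newtonPolyhedron_and_dotR_eq_weight ha
  refine ⟨⟨u, Finsupp.weight u a, fun h ↦ (hu 0).ne' (congrFun h 0), ⟨?_, expVec a,
    expVec_mem_newtonPolyhedron ha.1, dotR_expVec u a⟩, hface.symm, fun heq ↦ ?_⟩,
    ((finite_minExponents hu).image _).isCompact_convexHull ℝ⟩
  · refine convexHull_min ?_ (convex_halfSpace_ge (dotProductBilin ℝ ℝ u).isLinear _)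
    rintro _ ⟨b, hb, rfl⟩
    exact (ha.2 b hb).trans_eq (dotR_expVec u b).symm
  · have hlt : a < a + Finsupp.single 0 1 := lt_add_of_pos_right _ (by simp [pos_iff_ne_zero])
    have hmem := expVec_mem_newtonPolyhedron (isUpperSet_exponentSet hlt.le ha.1)
    rw [← heq, ← hface] at hmem
    exact (strictMono_weight hu hlt).ne' ((dotR_expVec u _).symm.trans hmem.2)

theorem isCompactFace_newtonPolyhedron_iff [NeZero n] (hI : (exponentSet I).Nonempty)
    {F : Set (Fin n → ℝ)} :
    IsCompactFace (newtonPolyhedron I) F ↔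
      ∃ u : Fin n → ℝ, (∀ i, 0 < u i) ∧ F = convexHull ℝ (expVec '' minExponents I u) := by
  constructor
  · rintro ⟨⟨u, c, -, ⟨hle, v, hv, hvc⟩, hF, -⟩, hcompact⟩
    have hc (a) (ha : a ∈ exponentSet I) : c ≤ Finsupp.weight u a :=
      (hle _ (expVec_mem_newtonPolyhedron ha)).trans_eq (dotR_expVec u a)
    have hvF : v ∈ {v ∈ newtonPolyhedron I | dotR u v = c} := ⟨hv, hvc⟩
    rw [setOf_mem_newtonPolyhedron_and_dotR_eq hc] at hvF
    obtain ⟨_, a, ⟨ha, rfl⟩, -⟩ := convexHull_nonempty_iff.mp ⟨v, hvF⟩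
    have hmin : a ∈ minExponents I u := ⟨ha, hc⟩
    rw [setOf_mem_newtonPolyhedron_and_dotR_eq_weight hmin] at hF
    refine ⟨u, forall_pos_of_isBounded_minExponents ⟨a, hmin⟩ ?_, hF⟩
    exact hcompact.isBounded.subset (hF ▸ subset_convexHull ℝ _)
  · rintro ⟨u, hu, rfl⟩
    exact isCompactFace_convexHull_minExponents hI hu

theorem bddAbove_finrank_isCompactFace (C : Set (Fin n → ℝ)) :
    BddAbove {d : ℕ | ∃ F, IsCompactFace C F ∧
      d = Module.finrank ℝ (affineSpan ℝ F).direction} := by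
  refine ⟨n, ?_⟩
  rintro d ⟨F, -, rfl⟩
  simpa using Submodule.finrank_le (affineSpan ℝ F).direction

theorem finrank_direction_le_maxCompactFaceDim {F : Set (Fin n → ℝ)}
    (hF : IsCompactFace (newtonPolyhedron I) F) :
    Module.finrank ℝ (affineSpan ℝ F).direction ≤ maxCompactFaceDim I :=
  le_csSup (bddAbove_finrank_isCompactFace _) ⟨F, hF, rfl⟩

theorem exists_isCompactFace_maxCompactFaceDim_eq_finrank {F : Set (Fin n → ℝ)}
    (hF : IsCompactFace (newtonPolyhedron I) F) :
    ∃ F, IsCompactFace (newtonPolyhedron I) F ∧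
      maxCompactFaceDim I = Module.finrank ℝ (affineSpan ℝ F).direction :=
  have hne : {d | ∃ F, IsCompactFace (newtonPolyhedron I) F ∧
    d = Module.finrank ℝ (affineSpan ℝ F).direction}.Nonempty := ⟨_, F, hF, rfl⟩
  Nat.sSup_mem hne (bddAbove_finrank_isCompactFace _)

theorem card_le_maxCompactFaceDim_add_one [NeZero n] {ι : Type*} [Fintype ι]
    {a : ι → Fin n →₀ ℕ} (haff : AffineIndependent ℝ fun i ↦ expVec (a i))
    (hu : ∀ i, 0 < u i) (ha : ∀ i, a i ∈ minExponents I u) :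
    Fintype.card ι ≤ maxCompactFaceDim I + 1 := by
  rcases isEmpty_or_nonempty ι with hι | ⟨⟨i⟩⟩
  · simp
  have hF := isCompactFace_convexHull_minExponents ⟨a i, (ha i).1⟩ hu
  have hsub : vectorSpan ℝ (Set.range fun i ↦ expVec (a i)) ≤
      (affineSpan ℝ (convexHull ℝ (expVec '' minExponents I u))).direction := by
    rw [affineSpan_convexHull, direction_affineSpan]
    exact vectorSpan_mono ℝ (Set.range_subset_iff.mpr fun i ↦ ⟨a i, ha i, rfl⟩)
  calc Fintype.card ι
    _ ≤ Module.finrank ℝ (vectorSpan ℝ (Set.range fun i ↦ expVec (a i))) + 1 :=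
      haff.card_le_finrank_succ
    _ ≤ maxCompactFaceDim I + 1 := by
      gcongr
      exact (Submodule.finrank_mono hsub).trans (finrank_direction_le_maxCompactFaceDim hF)

theorem exists_affineIndependent_minExponents [NeZero n] (hI : (exponentSet I).Nonempty) :
    ∃ u : Fin n → ℝ, (∀ i, 0 < u i) ∧ ∃ a : Fin (maxCompactFaceDim I + 1) → Fin n →₀ ℕ,
      (∀ i, a i ∈ minExponents I u) ∧ AffineIndependent ℝ fun i ↦ expVec (a i) := by
  obtain ⟨F, hF, hdim⟩ := exists_isCompactFace_maxCompactFaceDim_eq_finrank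
    (isCompactFace_convexHull_minExponents hI (u := 1) fun _ ↦ one_pos)
  obtain ⟨u, hu, rfl⟩ := (isCompactFace_newtonPolyhedron_iff hI).mp hF
  obtain ⟨p, hp, hspan, haff⟩ := exists_affineIndependent ℝ (Fin n → ℝ)
    (expVec '' minExponents I u)
  have : Nonempty p := Set.Nonempty.to_subtype <| (affineSpan_nonempty ℝ).mp <|
    hspan ▸ (affineSpan_nonempty ℝ).mpr ((minExponents_nonempty hI hu).image _)
  have := ((finite_minExponents hu).image expVec).subset hp |>.fintype
  have hcard : Fintype.card p = maxCompactFaceDim I + 1 := by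
    rw [← haff.finrank_vectorSpan_add_one, Subtype.range_coe, ← direction_affineSpan, hspan,
      ← affineSpan_convexHull, ← hdim]
  choose a ha hap using fun i ↦ hp ((Fintype.equivFinOfCardEq hcard).symm i).2
  refine ⟨u, hu, a, ha, ?_⟩
  simp only [hap]
  exact haff.comp_embedding (Fintype.equivFinOfCardEq hcard).symm.toEmbedding

end CompactFaces

section FiberRing

variable {σ R : Type*} [CommRing R]

/-- The extension `mR(I)` of the graded maximal ideal to the Rees algebra of `I`. -/
abbrev extendedMaxIdeal (I : Ideal (MvPolynomial σ R)) : Ideal (reesAlgebra I) :=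
  Ideal.span (Set.range fun i ↦ algebraMap (MvPolynomial σ R) (reesAlgebra I) (X i))

/-- The fiber ring `F(I) = R(I)/mR(I)`. -/
abbrev FiberRing (I : Ideal (MvPolynomial σ R)) : Type _ :=
  reesAlgebra I ⧸ extendedMaxIdeal I

variable {I : Ideal (MvPolynomial σ R)}

/-- The element `x^a t` of the Rees algebra of `I`, for a monomial `x^a ∈ I`. -/
def reesMonomial (a : exponentSet I) : reesAlgebra I :=
  ⟨Polynomial.monomial 1 (monomial a 1), reesAlgebra.monomial_mem.mpr ((pow_one I).symm ▸ a.2)⟩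

/-- The class of `x^a t` in the fiber ring of `I`, for a monomial `x^a ∈ I`. -/
def fiberMonomial (a : exponentSet I) : FiberRing I :=
  Ideal.Quotient.mk _ (reesMonomial a)

theorem mk_aeval_reesMonomial {ι : Type*} (a : ι → exponentSet I) (f : MvPolynomial ι R) :
    Ideal.Quotient.mk (extendedMaxIdeal I) (aeval (fun i ↦ reesMonomial (a i)) f) =
      aeval (fun i ↦ fiberMonomial (a i)) f := by
  induction f using MvPolynomial.induction_on with
  | C r => rw [algHom_C, algHom_C]; rfl
  | add f g hf hg => simp only [map_add, hf, hg]
  | mul_X f i hf => rw [map_mul, map_mul, map_mul, hf, aeval_X, aeval_X, fiberMonomial]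

theorem coe_aeval_reesMonomial_monomial {ι : Type*} (a : ι → exponentSet I) (α : ι →₀ ℕ) (r : R) :
    (aeval (fun i ↦ reesMonomial (a i)) (monomial α r) : Polynomial (MvPolynomial σ R)) =
      Polynomial.monomial α.degree
        (monomial (Finsupp.weight (fun i ↦ (a i : σ →₀ ℕ)) α) r) := by
  induction α using Finsupp.induction_linear generalizing r with
  | zero => simp
  | add α β hα hβ =>
    rw [← mul_one r, ← monomial_mul, map_mul, Subalgebra.coe_mul, hα, hβ,
      Polynomial.monomial_mul_monomial, monomial_mul, map_add, map_add]
  | single i k =>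
    rw [aeval_monomial, Finsupp.prod_single_index (h := fun i k ↦ reesMonomial (a i) ^ k)
      (pow_zero _), Subalgebra.coe_mul, Subalgebra.coe_pow, reesMonomial, Polynomial.monomial_pow,
      monomial_pow]
    change Polynomial.C (C r) * _ = _
    rw [Polynomial.C_mul_monomial, C_mul_monomial, Finsupp.degree_single, Finsupp.weight_single]
    simp

theorem mk_algebraMap_eq_algebraMap_constantCoeff (f : MvPolynomial σ R) :
    Ideal.Quotient.mk (extendedMaxIdeal I) (algebraMap _ _ f) =
      algebraMap R (FiberRing I) (constantCoeff f) := by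
  induction f using MvPolynomial.induction_on with
  | C r => rw [constantCoeff_C]; rfl
  | add f g hf hg => simp only [map_add, hf, hg]
  | mul_X f i _ =>
    have hX : Ideal.Quotient.mk (extendedMaxIdeal I) (algebraMap _ _ (X i)) = 0 :=
      Ideal.Quotient.eq_zero_iff_mem.mpr (Ideal.subset_span ⟨i, rfl⟩)
    rw [map_mul, map_mul, hX, map_mul, constantCoeff_X, mul_zero, mul_zero, map_zero]

theorem aeval_fiberMonomial_monomial_eq_zero {ι κ : Type*} {a : ι → exponentSet I}
    {b : κ → exponentSet I} {α : ι →₀ ℕ} {β : κ →₀ ℕ} (hdeg : β.degree = α.degree)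
    (hlt : Finsupp.weight (fun k ↦ (b k : σ →₀ ℕ)) β <
      Finsupp.weight (fun i ↦ (a i : σ →₀ ℕ)) α) :
    aeval (fun i ↦ fiberMonomial (a i)) (monomial α (1 : R)) = 0 := by
  obtain ⟨d, hd⟩ := exists_add_of_le hlt.le
  have hd₀ : d ≠ 0 := by rintro rfl; exact hlt.ne (by simpa using hd.symm)
  have hfactor : aeval (fun i ↦ reesMonomial (a i)) (monomial α (1 : R)) =
      algebraMap _ (reesAlgebra I) (monomial d (1 : R)) *
        aeval (fun k ↦ reesMonomial (b k)) (monomial β (1 : R)) := by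
    refine Subtype.ext ?_
    rw [Subalgebra.coe_mul, coe_aeval_reesMonomial_monomial, coe_aeval_reesMonomial_monomial]
    change _ = Polynomial.C _ * _
    rw [Polynomial.C_mul_monomial, monomial_mul, mul_one, hdeg, hd, add_comm d]
  rw [← mk_aeval_reesMonomial, hfactor, map_mul, mk_algebraMap_eq_algebraMap_constantCoeff,
    constantCoeff_monomial, if_neg hd₀, map_zero, zero_mul]

theorem mul_le_weight_of_mem_pow {u : σ → ℝ} (hu : ∀ i, 0 ≤ u i) {c : ℝ}
    (hc : ∀ f ∈ I, ∀ a ∈ f.support, c ≤ Finsupp.weight u a) {k : ℕ} {f : MvPolynomial σ R}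
    (hf : f ∈ I ^ k) {a : σ →₀ ℕ} (ha : a ∈ f.support) : k * c ≤ Finsupp.weight u a := by
  induction k generalizing f a with
  | zero =>
    rw [Nat.cast_zero, zero_mul]
    exact weight_nonneg hu a
  | succ k ih =>
    rw [pow_succ] at hf
    induction hf using Submodule.mul_induction_on' generalizing a with
    | mem_mul_mem p hp q hq =>
      obtain ⟨b, hb, d, hd, rfl⟩ := Finset.mem_add.mp (support_mul p q ha)
      rw [map_add, Nat.cast_add_one, add_one_mul]
      exact add_le_add (ih hp hb) (hc q hq d hd)
    | add f _ g _ hf hg =>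
      exact (Finset.mem_union.mp (support_add ha)).elim hf hg

theorem mul_lt_weight_of_mem_extendedMaxIdeal {u : σ → ℝ} (hu : ∀ i, 0 < u i) {c : ℝ}
    (hc : ∀ f ∈ I, ∀ a ∈ f.support, c ≤ Finsupp.weight u a) {r : reesAlgebra I}
    (hr : r ∈ extendedMaxIdeal I) {k : ℕ} {a : σ →₀ ℕ}
    (ha : a ∈ ((r : Polynomial (MvPolynomial σ R)).coeff k).support) :
    k * c < Finsupp.weight u a := by
  induction hr using Submodule.span_induction generalizing k a with
  | mem x hx =>
    obtain ⟨i, rfl⟩ := hx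
    change a ∈ ((Polynomial.C (X i : MvPolynomial σ R)).coeff k).support at ha
    rw [Polynomial.coeff_C] at ha
    split_ifs at ha with hk
    · have ha' := Finset.mem_singleton.mp (support_monomial_subset ha)
      simpa [hk, ha', Finsupp.weight_single] using hu i
    · simp at ha
  | zero => simp at ha
  | add x y _ _ hx hy =>
    rw [Subalgebra.coe_add, Polynomial.coeff_add] at ha
    exact (Finset.mem_union.mp (support_add ha)).elim hx hy
  | smul q x _ hx =>
    rw [smul_eq_mul, Subalgebra.coe_mul, Polynomial.coeff_mul] at ha
    obtain ⟨⟨i, j⟩, hij, h⟩ := Finset.mem_biUnion.mp (support_sum ha)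
    obtain ⟨b, hb, d, hd, rfl⟩ := Finset.mem_add.mp (support_mul _ _ h)
    rw [← Finset.HasAntidiagonal.mem_antidiagonal.mp hij, map_add, Nat.cast_add, add_mul]
    exact add_lt_add_of_le_of_lt (mul_le_weight_of_mem_pow (fun i ↦ (hu i).le) hc (q.2 i) hb)
      (hx hd)

instance [Nontrivial R] : Nontrivial (FiberRing I) := by
  refine Ideal.Quotient.nontrivial_iff.mpr fun h ↦ ?_
  have hlt := mul_lt_weight_of_mem_extendedMaxIdeal (u := 1) (c := 0) (k := 0) (a := 0)
    (fun _ ↦ one_pos) (fun _ _ _ _ ↦ weight_nonneg (fun _ ↦ zero_le_one) _)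
    ((Ideal.eq_top_iff_one _).mp h) (by simp)
  simp at hlt

instance [IsNoetherianRing R] [Finite σ] : Algebra.FiniteType R (FiberRing I) := by
  have : Algebra.FiniteType (MvPolynomial σ R) (reesAlgebra I) :=
    (Subalgebra.fg_iff_finiteType _).mp (reesAlgebra.fg (IsNoetherian.noetherian I))
  have : Algebra.FiniteType R (reesAlgebra I) :=
    Algebra.FiniteType.trans (S := MvPolynomial σ R) inferInstance this
  exact .of_surjective (Ideal.Quotient.mkₐ R (extendedMaxIdeal I)) Ideal.Quotient.mk_surjective

end FiberRing

section Independence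

variable {σ R ι : Type*} [CommRing R] {I : Ideal (MvPolynomial σ R)} {a : ι → exponentSet I}

theorem injective_degree_weight_of_algebraicIndependent [Nontrivial R]
    (h : AlgebraicIndependent R fun i ↦ fiberMonomial (a i)) :
    Function.Injective fun α : ι →₀ ℕ ↦
      (α.degree, Finsupp.weight (fun i ↦ (a i : σ →₀ ℕ)) α) := by
  intro α β hαβ
  obtain ⟨hdeg, hweight⟩ := Prod.mk.inj hαβ
  have hrees : aeval (fun i ↦ reesMonomial (a i)) (monomial α (1 : R)) =
      aeval (fun i ↦ reesMonomial (a i)) (monomial β (1 : R)) := by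
    refine Subtype.ext ?_
    rw [coe_aeval_reesMonomial_monomial, coe_aeval_reesMonomial_monomial, hdeg, hweight]
  refine monomial_left_injective (one_ne_zero (α := R)) (h ?_)
  rw [← mk_aeval_reesMonomial, hrees, mk_aeval_reesMonomial]

theorem exists_mem_minExponents_of_algebraicIndependent [Finite σ] [Finite ι] [Nontrivial R]
    (h : AlgebraicIndependent R fun i ↦ fiberMonomial (a i)) :
    ∃ u : σ → ℝ, (∀ i, 0 < u i) ∧ ∀ i, (a i : σ →₀ ℕ) ∈ minExponents I u := by
  cases nonempty_fintype ι
  have := (finite_setOf_minimal_mem_exponentSet (I := I)).to_subtype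
  -- Either some positive weight attains its minimum over the exponents of `I` at the mean of the
  -- `a i`, hence at every `a i`, or a power of the product of the `x^(a i) t` lies in `mR(I)`.
  obtain ⟨u, hu, hle⟩ | ⟨β, hβ⟩ := exists_pos_weight_le_or_exists_weight_smul_lt
    (∑ i, (a i : σ →₀ ℕ)) (Fintype.card ι)
    (fun g : {g | Minimal (· ∈ exponentSet I) g} ↦ (g : σ →₀ ℕ))
  · refine ⟨u, hu, fun i ↦ ⟨(a i).2, fun b hb ↦ ?_⟩⟩
    obtain ⟨a₀, ha₀⟩ := minExponents_nonempty ⟨_, (a i).2⟩ hu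
    obtain ⟨g, hga₀, hg⟩ := exists_minimal_le_of_wellFoundedLT _ a₀ ha₀.1
    have hsum : ∑ i, Finsupp.weight u (a i : σ →₀ ℕ) ≤ ∑ _i : ι, Finsupp.weight u a₀ := by
      calc ∑ i, Finsupp.weight u (a i : σ →₀ ℕ)
        _ ≤ Fintype.card ι * Finsupp.weight u g := by simpa using hle ⟨g, hg⟩
        _ ≤ ∑ _i : ι, Finsupp.weight u a₀ := by
          simpa using mul_le_mul_of_nonneg_left ((strictMono_weight hu).monotone hga₀)
            (Nat.cast_nonneg _)
    have heq := (Finset.sum_eq_sum_iff_of_le fun i _ ↦ ha₀.2 _ (a i).2).mp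
      ((Finset.sum_le_sum fun i _ ↦ ha₀.2 _ (a i).2).antisymm hsum)
    exact (heq i (Finset.mem_univ i)) ▸ ha₀.2 b hb
  · let α : ι →₀ ℕ := β.degree • Finsupp.equivFunOnFinite.symm 1
    have hdeg : (Fintype.card ι • β).degree = α.degree := by
      simp [α, Finsupp.degree_eq_sum]
    have hweight : Finsupp.weight (fun i ↦ (a i : σ →₀ ℕ)) α =
        β.degree • ∑ i, (a i : σ →₀ ℕ) := by
      simp [α, Finsupp.weight_eq_sum, Finset.smul_sum]
    have hzero := aeval_fiberMonomial_monomial_eq_zero (R := R) (a := a)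
      (b := fun g : {g | Minimal (· ∈ exponentSet I) g} ↦ ⟨g, g.2.prop⟩) hdeg (hweight ▸ hβ)
    exact absurd (h (hzero.trans (map_zero _).symm)) (monomial_eq_zero.not.mpr one_ne_zero)

theorem coeff_coeff_aeval_reesMonomial
    (hinj : Function.Injective fun α : ι →₀ ℕ ↦
      (α.degree, Finsupp.weight (fun i ↦ (a i : σ →₀ ℕ)) α)) (f : MvPolynomial ι R) (β : ι →₀ ℕ) :
    (((aeval (fun i ↦ reesMonomial (a i)) f : reesAlgebra I) :
        Polynomial (MvPolynomial σ R)).coeff β.degree).coeff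
      (Finsupp.weight (fun i ↦ (a i : σ →₀ ℕ)) β) = f.coeff β := by
  induction f using MvPolynomial.induction_on' with
  | monomial α r =>
    rw [coe_aeval_reesMonomial_monomial, Polynomial.coeff_monomial, coeff_monomial]
    by_cases h : α = β
    · simp [h]
    · rw [if_neg h]
      split_ifs with hdeg
      · rw [coeff_monomial, if_neg fun hweight ↦ h (hinj (Prod.ext hdeg hweight))]
      · rw [coeff_zero]
  | add f g hf hg => rw [map_add, Subalgebra.coe_add, Polynomial.coeff_add, coeff_add, hf, hg,
      coeff_add]

theorem algebraicIndependent_fiberMonomial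
    (hI : ∀ f ∈ I, ∀ b ∈ f.support, b ∈ exponentSet I) {u : σ → ℝ} (hu : ∀ i, 0 < u i)
    (ha : ∀ i, (a i : σ →₀ ℕ) ∈ minExponents I u)
    (hinj : Function.Injective fun α : ι →₀ ℕ ↦
      (α.degree, Finsupp.weight (fun i ↦ (a i : σ →₀ ℕ)) α)) :
    AlgebraicIndependent R fun i ↦ fiberMonomial (a i) := by
  obtain ⟨c, hc, hac⟩ : ∃ c, (∀ b ∈ exponentSet I, c ≤ Finsupp.weight u b) ∧
      ∀ i, Finsupp.weight u (a i : σ →₀ ℕ) = c := by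
    rcases isEmpty_or_nonempty ι with hι | ⟨⟨i⟩⟩
    · exact ⟨0, fun b _ ↦ weight_nonneg (fun j ↦ (hu j).le) b, isEmptyElim⟩
    · exact ⟨_, (ha i).2, fun j ↦ ((mem_minExponents_iff_of_mem (ha i)).mp (ha j)).2⟩
  refine (injective_iff_map_eq_zero _).mpr fun f hf ↦ by_contra fun hne ↦ ?_
  rw [← mk_aeval_reesMonomial, Ideal.Quotient.eq_zero_iff_mem] at hf
  obtain ⟨β, hβ⟩ := support_nonempty.mpr hne
  have hweight (α : ι →₀ ℕ) :
      Finsupp.weight u (Finsupp.weight (fun i ↦ (a i : σ →₀ ℕ)) α) = α.degree * c := by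
    induction α using Finsupp.induction_linear with
    | zero => simp
    | add α β hα hβ => simp only [map_add, hα, hβ, Nat.cast_add, add_mul]
    | single i k => simp [Finsupp.weight_single, hac]
  have hlt := mul_lt_weight_of_mem_extendedMaxIdeal hu
    (fun f hf b hb ↦ hc b (hI f hf b hb)) hf (k := β.degree)
    (a := Finsupp.weight (fun i ↦ (a i : σ →₀ ℕ)) β)
    (by rwa [mem_support_iff, coeff_coeff_aeval_reesMonomial hinj, ← mem_support_iff])
  exact hlt.ne (hweight β).symm

end Independence

section MonomialIdeal

variable {K : Type*} [Field K] {n : ℕ} {I : Ideal (MvPolynomial (Fin n) K)}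

theorem IsMonomialIdeal.span_image_exponentSet (hI : IsMonomialIdeal I) :
    Ideal.span ((fun a ↦ monomial a (1 : K)) '' exponentSet I) = I := by
  refine le_antisymm (Ideal.span_le.mpr (Set.image_subset_iff.mpr fun a ha ↦ ha)) ?_
  obtain ⟨S, rfl⟩ := hI
  exact Ideal.span_mono (Set.image_mono fun a ha ↦ Ideal.subset_span ⟨a, ha, rfl⟩)

theorem IsMonomialIdeal.mem_exponentSet_of_mem_support (hI : IsMonomialIdeal I)
    {f : MvPolynomial (Fin n) K} (hf : f ∈ I) {a : Fin n →₀ ℕ} (ha : a ∈ f.support) :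
    a ∈ exponentSet I := by
  rw [← hI.span_image_exponentSet, mem_ideal_span_monomial_image] at hf
  obtain ⟨b, hb, hba⟩ := hf a ha
  exact isUpperSet_exponentSet hba hb

theorem IsMonomialIdeal.adjoin_range_reesMonomial (hI : IsMonomialIdeal I) :
    Algebra.adjoin (MvPolynomial (Fin n) K) (Set.range (reesMonomial (I := I))) = ⊤ := by
  refine Subalgebra.map_injective (f := (reesAlgebra I).val) Subtype.val_injective ?_
  have hrange : (reesAlgebra I).val '' Set.range (reesMonomial (I := I)) =
      Polynomial.monomial 1 '' ((fun a ↦ monomial a (1 : K)) '' exponentSet I) := by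
    rw [← Set.range_comp, Set.image_image, Set.image_eq_range]
    rfl
  rw [AlgHom.map_adjoin, hrange, Algebra.map_top, Subalgebra.range_val,
    ← adjoin_monomial_eq_reesAlgebra]
  nth_rw 2 [← hI.span_image_exponentSet]
  rw [Ideal.span, Submodule.map_span, Algebra.adjoin_span]

theorem IsMonomialIdeal.adjoin_range_fiberMonomial (hI : IsMonomialIdeal I) :
    Algebra.adjoin K (Set.range (fiberMonomial (I := I))) = ⊤ := by
  refine top_le_iff.mp fun x _ ↦ ?_
  obtain ⟨r, rfl⟩ := Ideal.Quotient.mk_surjective x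
  have hr : r ∈ Algebra.adjoin _ (Set.range (reesMonomial (I := I))) :=
    hI.adjoin_range_reesMonomial ▸ Algebra.mem_top
  induction hr using Algebra.adjoin_induction with
  | mem r hr =>
    obtain ⟨a, rfl⟩ := hr
    exact Algebra.subset_adjoin ⟨a, rfl⟩
  | algebraMap f =>
    rw [mk_algebraMap_eq_algebraMap_constantCoeff]
    exact algebraMap_mem _ _
  | add r s _ _ hr hs => rw [map_add]; exact add_mem (hr trivial) (hs trivial)
  | mul r s _ _ hr hs => rw [map_mul]; exact mul_mem (hr trivial) (hs trivial)

theorem IsMonomialIdeal.exponentSet_nonempty (hI : IsMonomialIdeal I) (hne : I ≠ ⊥) :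
    (exponentSet I).Nonempty := by
  obtain ⟨f, hf, hf₀⟩ := Submodule.exists_mem_ne_zero_of_ne_bot hne
  obtain ⟨a, ha⟩ := support_nonempty.mpr hf₀
  exact ⟨a, hI.mem_exponentSet_of_mem_support hf ha⟩

theorem IsMonomialIdeal.algebraicIndependent_fiberMonomial_iff (hI : IsMonomialIdeal I)
    {ι : Type*} [Finite ι] {a : ι → exponentSet I} :
    (AlgebraicIndependent K fun i ↦ fiberMonomial (a i)) ↔
      AffineIndependent ℝ (fun i ↦ expVec (a i : Fin n →₀ ℕ)) ∧
        ∃ u : Fin n → ℝ, (∀ i, 0 < u i) ∧ ∀ i, (a i : Fin n →₀ ℕ) ∈ minExponents I u := by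
  constructor
  · exact fun h ↦ ⟨affineIndependent_natCast_iff.mpr
      (injective_degree_weight_of_algebraicIndependent h),
      exists_mem_minExponents_of_algebraicIndependent h⟩
  · rintro ⟨haff, u, hu, ha⟩
    exact algebraicIndependent_fiberMonomial
      (fun f hf b hb ↦ hI.mem_exponentSet_of_mem_support hf hb) hu ha
      (affineIndependent_natCast_iff.mp haff)

end MonomialIdeal

theorem stmt17 {K : Type*} [Field K] {n : ℕ} (I : Ideal (MvPolynomial (Fin n) K))
    (hI : IsMonomialIdeal I) (hne : I ≠ ⊥) (hproper : I ≠ ⊤) :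
    ringKrullDim ((reesAlgebra I) ⧸ Ideal.span (Set.range fun i =>
        algebraMap (MvPolynomial (Fin n) K) (reesAlgebra I) (X i))) =
      ((maxCompactFaceDim I + 1 : ℕ) : WithBot ℕ∞) := by
  obtain ⟨a₀, ha₀⟩ := hI.exponentSet_nonempty hne
  have : NeZero n := ⟨by
    rintro rfl
    refine hproper ((Ideal.eq_top_iff_one I).mpr ?_)
    simpa [exponentSet, Subsingleton.elim a₀ 0] using ha₀⟩
  change ringKrullDim (FiberRing I) = _
  refine le_antisymm ?_ ?_
  · obtain ⟨s, hs, hdim⟩ :=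
      exists_algebraicIndepOn_ringKrullDim_eq_card (B := FiberRing I) hI.adjoin_range_fiberMonomial
    obtain ⟨haff, u, hu, ha⟩ := hI.algebraicIndependent_fiberMonomial_iff.mp hs
    rw [hdim]
    exact_mod_cast (Fintype.card_coe s) ▸ card_le_maxCompactFaceDim_add_one haff hu ha
  · obtain ⟨u, hu, a, ha, haff⟩ := exists_affineIndependent_minExponents ⟨a₀, ha₀⟩
    simpa using enatCard_le_ringKrullDim_of_algebraicIndependent <|
      (hI.algebraicIndependent_fiberMonomial_iff (a := fun i ↦ ⟨a i, (ha i).1⟩)).mpr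
        ⟨haff, u, hu, ha⟩
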